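/- arXiv:2206.11835 — 2 statements merged into one kernel-verified Lean document; each statement's English description precedes it below -/
import Mathlib

section
/- Let f be a holomorphic function on the product (Δ*)^ℓ × Δ^(n−ℓ) of punctured unit disks and unit disks. If for some real p with 0 < p < ∞ and some constant C > 0 the integral of |f|^p over (Δ*)^ℓ × Δ^(n−ℓ) with respect to Lebesgue measure is at most C, then f extends to a meromorphic function on Δ^n; more precisely, (z₁⋯z_ℓ)^⌈2/p⌉ · f extends to a holomorphic function on Δ^n. -/
open MeasureTheory

lemma aux_submean (p : ℝ) (hp : 0 < p) (φ : ℂ → ℂ)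
    (hφ : AnalyticOnNhd ℂ φ (Metric.closedBall 0 1)) :
    ‖φ 0‖ ^ p ≤ Real.circleAverage (fun z => ‖φ z‖ ^ p) 0 1 := by
  by_cases h0 : φ 0 = 0
  · rw [h0, norm_zero, Real.zero_rpow hp.ne']
    exact Real.circleAverage_nonneg_of_nonneg (fun x _ => by positivity)
  have hcont : ContinuousOn (fun z => ‖φ z‖ ^ p) (Metric.sphere 0 |(1:ℝ)|) := by
    have : ContinuousOn φ (Metric.sphere 0 |(1:ℝ)|) :=
      hφ.continuousOn.mono (by simpa using Metric.sphere_subset_closedBall)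
    exact this.norm.rpow_const (fun _ _ => Or.inr hp.le)
  have hint1 : CircleIntegrable (fun z => ‖φ z‖ ^ p) 0 1 := hcont.circleIntegrable'
  have h0' : 0 < ‖φ 0‖ := norm_pos_iff.mpr h0
  -- scale
  set b : ℝ := Real.exp (1/p) / ‖φ 0‖ with hb
  have hbpos : 0 < b := by positivity
  set h : ℂ → ℂ := fun z => (b : ℂ) * φ z with hh
  have hhan : AnalyticOnNhd ℂ h (Metric.closedBall 0 |1|) := by
    simpa [hh] using (analyticOnNhd_const (v := (b:ℂ))).mul hφ
  have hn : ∀ z, ‖h z‖ = b * ‖φ z‖ := fun z => by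
    simp [hh, abs_of_pos hbpos]
  have hh0 : ‖h 0‖ = Real.exp (1/p) := by
    rw [hn, hb]; field_simp
  have hh0ne : h 0 ≠ 0 := by
    rw [← norm_pos_iff, hh0]; positivity
  have hJ := hhan.circleAverage_log_norm one_ne_zero hh0ne
  have hge : Real.log ‖h 0‖ ≤ Real.circleAverage (Real.log ‖h ·‖) 0 1 := by
    rw [hJ]
    have : 0 ≤ ∑ᶠ u, (MeromorphicOn.divisor h (Metric.closedBall 0 |1|) u : ℝ) * Real.log (1 * ‖(0:ℂ) - u‖⁻¹) := by
      apply finsum_nonneg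
      intro u
      by_cases hu : u ∈ Metric.closedBall (0:ℂ) |1|
      · refine mul_nonneg (mod_cast MeromorphicOn.AnalyticOnNhd.divisor_nonneg hhan ..) ?_
        simp at hu
        by_cases hu0 : u = 0
        · simp [hu0]
        · apply Real.log_nonneg
          simp
          exact (one_le_inv₀ (by positivity)).2 hu
      · rw [Function.locallyFinsuppWithin.apply_eq_zero_of_notMem _ hu]; simp
    linarith
  have hlogint : CircleIntegrable (Real.log ‖h ·‖) 0 1 := by
    apply MeromorphicOn.circleIntegrable_log_norm
    exact (hhan.mono Metric.sphere_subset_closedBall).meromorphicOn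
  have key : ∀ z, (Real.exp 1 * p) * Real.log ‖h z‖ ≤ b ^ p * ‖φ z‖ ^ p := by
    intro z
    rw [← Real.mul_rpow hbpos.le (norm_nonneg _), ← hn]
    by_cases hz : h z = 0
    · simp [hz]; positivity
    · have hz' : 0 < ‖h z‖ := norm_pos_iff.mpr hz
      rw [Real.rpow_def_of_pos hz']
      have := Real.add_one_le_exp (Real.log ‖h z‖ * p - 1)
      have e : Real.exp (Real.log ‖h z‖ * p) = Real.exp 1 * Real.exp (Real.log ‖h z‖ * p - 1) := by
        rw [← Real.exp_add]; congr 1; ring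
      rw [e]
      have := mul_le_mul_of_nonneg_left this (Real.exp_pos 1).le
      linarith
  have hA := Real.circleAverage_mono (f₁ := fun z => (Real.exp 1 * p) • Real.log ‖h z‖)
    (f₂ := fun z => (b ^ p) • (‖φ z‖ ^ p)) (c := 0) (R := 1) hlogint.const_smul hint1.const_smul (fun z _ => key z)
  rw [Real.circleAverage_fun_smul, Real.circleAverage_fun_smul] at hA
  rw [hh0, Real.log_exp] at hge
  simp only [smul_eq_mul] at hA
  have h1 : b ^ p * ‖φ 0‖ ^ p = Real.exp 1 := by
    rw [← Real.mul_rpow hbpos.le (norm_nonneg _), ← hn, hh0, ← Real.exp_mul]; congr 1; field_simp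
  have h2 : Real.exp 1 ≤ (Real.exp 1 * p) * Real.circleAverage (Real.log ‖h ·‖) 0 1 := by
    calc Real.exp 1 = (Real.exp 1 * p) * (1/p) := by field_simp
      _ ≤ _ := by gcongr
  have h3 : b ^ p * ‖φ 0‖ ^ p ≤ b ^ p * Real.circleAverage (fun z => ‖φ z‖ ^ p) 0 1 := by
    rw [h1]; exact h2.trans hA
  exact le_of_mul_le_mul_left h3 (by positivity)

lemma aux_submean_lint (p : ℝ) (hp : 0 < p) (φ : ℂ → ℂ)
    (hφ : AnalyticOnNhd ℂ φ (Metric.closedBall 0 1)) :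
    ENNReal.ofReal (2 * Real.pi) * ENNReal.ofReal (‖φ 0‖ ^ p) ≤
      ∫⁻ θ in Set.Ioc 0 (2 * Real.pi), ENNReal.ofReal (‖φ (circleMap 0 1 θ)‖ ^ p) := by
  have h := aux_submean p hp φ hφ
  have hpi := Real.pi_pos
  have hcont : ContinuousOn (fun z => ‖φ z‖ ^ p) (Metric.sphere 0 |(1:ℝ)|) := by
    have : ContinuousOn φ (Metric.sphere 0 |(1:ℝ)|) :=
      hφ.continuousOn.mono (by simpa using Metric.sphere_subset_closedBall)
    exact this.norm.rpow_const (fun _ _ => Or.inr hp.le)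
  have hint1 : CircleIntegrable (fun z => ‖φ z‖ ^ p) 0 1 := hcont.circleIntegrable'
  rw [← ENNReal.ofReal_mul (by positivity)]
  rw [← ofReal_integral_eq_lintegral_ofReal]
  · apply ENNReal.ofReal_le_ofReal
    rw [Real.circleAverage_def, intervalIntegral.integral_of_le (by positivity), smul_eq_mul] at h
    rw [inv_mul_eq_div, le_div_iff₀ (by positivity)] at h
    linarith
  · have := hint1
    unfold CircleIntegrable at this
    rw [intervalIntegrable_iff_integrableOn_Ioc_of_le (by positivity)] at this
    exact this
  · filter_upwards with x
    positivity

-- sub mean value over balanced set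
lemma aux_vol {n : ℕ} (p : ℝ) (hp : 0 < p) (f : (Fin n → ℂ) → ℂ) (S : Set (Fin n → ℂ))
    (hSo : IsOpen S) (hf : DifferentiableOn ℂ f S) (z : Fin n → ℂ) (P : Set (Fin n → ℂ))
    (hPo : MeasurableSet P) (hPb : ∀ a : ℂ, ‖a‖ ≤ 1 → ∀ w ∈ P, a • w ∈ P)
    (hPS : ∀ w ∈ P, z + w ∈ S) :
    volume P * ENNReal.ofReal (‖f z‖ ^ p) ≤ ∫⁻ w in S, ENNReal.ofReal (‖f w‖ ^ p) := by
  have hpi := Real.pi_pos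
  set G : (Fin n → ℂ) → ENNReal := S.indicator (fun w => ENNReal.ofReal (‖f w‖ ^ p)) with hG
  have hGm : Measurable G := by
    classical
    rw [hG, ← Set.piecewise_eq_indicator]
    apply ContinuousOn.measurable_piecewise
    · exact ENNReal.continuous_ofReal.comp_continuousOn (hf.continuousOn.norm.rpow_const (fun _ _ => Or.inr hp.le))
    · exact continuousOn_const
    · exact hSo.measurableSet
  have hline : ∀ w ∈ P, ENNReal.ofReal (2 * Real.pi) * ENNReal.ofReal (‖f z‖ ^ p) ≤
      ∫⁻ θ in Set.Ioc 0 (2 * Real.pi), G (z + circleMap 0 1 θ • w) := by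
    intro w hw
    have hopen : IsOpen ((fun a : ℂ => z + a • w) ⁻¹' S) := hSo.preimage (by fun_prop)
    have hd : DifferentiableOn ℂ (fun a : ℂ => f (z + a • w)) ((fun a : ℂ => z + a • w) ⁻¹' S) := by
      exact hf.comp (g := f) (f := fun a : ℂ => z + a • w) (by fun_prop) (fun a ha => ha)
    have hsub : Metric.closedBall (0:ℂ) 1 ⊆ ((fun a : ℂ => z + a • w) ⁻¹' S) := by
      intro a ha
      exact hPS _ (hPb a (by simpa using ha) w hw)
    have := aux_submean_lint p hp (fun a : ℂ => f (z + a • w)) ((hd.analyticOnNhd hopen).mono hsub)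
    simp only [zero_smul, add_zero] at this
    refine this.trans (lintegral_mono fun θ => ?_)
    have : z + circleMap 0 1 θ • w ∈ S := hPS _ (hPb _ (by simp [circleMap]) w hw)
    simp [hG, this]
  have hrot : ∀ θ : ℝ, ∫⁻ w in P, G (z + circleMap 0 1 θ • w) = ∫⁻ w in P, G (z + w) := by
    intro θ
    have hmp : MeasurePreserving (fun w : Fin n → ℂ => circleMap 0 1 θ • w) := by
      have := volume_preserving_pi (fun _ : Fin n => (rotation (Circle.exp θ)).measurePreserving)
      convert this using 1
      ext w i
      simp [circleMap]
    have hpre : (fun w : Fin n → ℂ => circleMap 0 1 θ • w) ⁻¹' P = P := by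
      ext w
      constructor
      · intro hw
        have := hPb (circleMap 0 1 θ)⁻¹ (by simp [circleMap]) _ hw
        rwa [inv_smul_smul₀ (by simp [circleMap])] at this
      · intro hw
        exact hPb _ (by simp [circleMap]) _ hw
    have := hmp.setLIntegral_comp_preimage hPo (f := fun w => G (z + w)) (by fun_prop)
    rw [hpre] at this
    exact this
  have h1 : ∫⁻ w in P, ENNReal.ofReal (2 * Real.pi) * ENNReal.ofReal (‖f z‖ ^ p) ≤
      ∫⁻ w in P, ∫⁻ θ in Set.Ioc 0 (2 * Real.pi), G (z + circleMap 0 1 θ • w) :=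
    setLIntegral_mono' hPo hline
  rw [lintegral_lintegral_swap] at h1
  · simp only [hrot] at h1
    rw [setLIntegral_const, setLIntegral_const, Real.volume_Ioc, sub_zero, mul_comm _ (volume P), mul_left_comm, mul_comm (∫⁻ w in P, G (z + w))] at h1
    rw [ENNReal.mul_le_mul_iff_right (by simp [hpi]) ENNReal.ofReal_ne_top] at h1
    refine h1.trans ?_
    calc ∫⁻ w in P, G (z + w) ≤ ∫⁻ w, G (z + w) := setLIntegral_le_lintegral _ _
      _ = ∫⁻ w, G w := lintegral_add_left_eq_self G z
      _ = _ := by rw [hG, lintegral_indicator hSo.measurableSet]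
  · apply Measurable.aemeasurable
    have : Measurable (fun q : (Fin n → ℂ) × ℝ => z + circleMap 0 1 q.2 • q.1) := by
      apply Continuous.measurable
      have := continuous_circleMap 0 1
      fun_prop
    exact hGm.comp this

lemma aux_mean (φ : ℂ → ℂ) (R R' M : ℝ) (hR : 0 < R) (hRR : R < R') (T : Set ℂ) (hT : T.Finite)
    (h0 : (0:ℂ) ∉ T) (hTR : ∀ a ∈ Metric.sphere (0:ℂ) R, a ∉ T)
    (hd : DifferentiableOn ℂ φ (Metric.ball 0 R' \ T))
    (hb : ∀ a ∈ Metric.ball (0:ℂ) R' \ T, ‖φ a‖ ≤ M) :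
    Real.circleAverage φ 0 R = φ 0 := by
  set h : ℂ → ℂ := fun a => Filter.limUnder (nhdsWithin a {a}ᶜ) φ with hh
  have hopen : IsOpen (Metric.ball (0:ℂ) R' \ T) := Metric.isOpen_ball.sdiff hT.isClosed
  have heq : ∀ a ∈ Metric.ball (0:ℂ) R' \ T, h a = φ a := by
    intro a ha
    have hc : ContinuousAt φ a := (hd.differentiableAt (hopen.mem_nhds ha)).continuousAt
    exact (hc.tendsto.mono_left nhdsWithin_le_nhds).limUnder_eq
  have hdiff : ∀ a ∈ Metric.ball (0:ℂ) R', DifferentiableAt ℂ h a := by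
    intro a ha
    have hVo : IsOpen (Metric.ball (0:ℂ) R' \ (T \ {a})) :=
      Metric.isOpen_ball.sdiff (hT.subset Set.sdiff_subset).isClosed
    have haV : a ∈ Metric.ball (0:ℂ) R' \ (T \ {a}) := ⟨ha, by simp⟩
    have hsub : (Metric.ball (0:ℂ) R' \ (T \ {a})) \ {a} ⊆ Metric.ball (0:ℂ) R' \ T := by
      rintro x ⟨⟨hx1, hx2⟩, hx3⟩
      exact ⟨hx1, fun hxT => hx2 ⟨hxT, hx3⟩⟩
    have := Complex.differentiableOn_update_limUnder_of_bddAbove (hVo.mem_nhds haV)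
      (hd.mono hsub) ⟨M, by rintro _ ⟨x, hx, rfl⟩; exact hb x (hsub hx)⟩
    have h2 := this.differentiableAt (hVo.mem_nhds haV)
    refine h2.congr_of_eventuallyEq ?_
    filter_upwards [hVo.mem_nhds haV] with x hx
    by_cases hxa : x = a
    · subst hxa; simp [hh]
    · rw [Function.update_of_ne hxa, heq x (hsub ⟨hx, hxa⟩)]
  have hmean : Real.circleAverage h 0 R = h 0 := by
    apply circleAverage_of_differentiable_on_off_countable Set.countable_empty
    · intro a ha
      refine (hdiff a ?_).continuousAt.continuousWithinAt
      rw [abs_of_pos hR] at ha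
      exact Metric.closedBall_subset_ball hRR ha
    · intro a ha
      refine (hdiff a ?_)
      rw [abs_of_pos hR] at ha
      exact Metric.ball_subset_ball hRR.le ha.1
  rw [← heq 0 ⟨by simpa using hR.trans hRR, h0⟩, ← hmean]
  apply Real.circleAverage_congr_sphere
  intro a ha
  rw [abs_of_pos hR] at ha
  refine (heq a ⟨?_, hTR a ha⟩).symm
  exact Metric.closedBall_subset_ball hRR (Metric.sphere_subset_closedBall ha)

lemma aux_fderiv {n : ℕ} (F : (Fin n → ℂ) → ℂ) (y : Fin n → ℂ) (r M : ℝ) (hr : 0 < r)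
    (hd : DifferentiableOn ℂ F (Metric.ball y (2 * r)))
    (hb : ∀ x ∈ Metric.ball y (2 * r), ‖F x‖ ≤ M) : ‖fderiv ℂ F y‖ ≤ M / r := by
  have hy : y ∈ Metric.ball y (2 * r) := by simp [hr]
  have hM : 0 ≤ M := (norm_nonneg _).trans (hb y hy)
  refine ContinuousLinearMap.opNorm_le_bound _ (by positivity) fun u => ?_
  by_cases hu : u = 0
  · simp [hu]
  have hu' : 0 < ‖u‖ := norm_pos_iff.mpr hu
  have hFy : DifferentiableAt ℂ F y := hd.differentiableAt (Metric.isOpen_ball.mem_nhds hy)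
  have hder : HasDerivAt (fun a : ℂ => F (y + a • u)) (fderiv ℂ F y u) 0 := by
    have h1 : HasDerivAt (fun a : ℂ => y + a • u) u 0 := by
      simpa using ((hasDerivAt_id (0:ℂ)).smul_const u).const_add y
    have h2 : HasFDerivAt F (fderiv ℂ F y) (y + (0:ℂ) • u) := by simpa using hFy.hasFDerivAt
    exact h2.comp_hasDerivAt 0 h1
  have hin : ∀ a : ℂ, ‖a‖ ≤ r / ‖u‖ → y + a • u ∈ Metric.ball y (2 * r) := by
    intro a ha
    rw [le_div_iff₀ hu'] at ha
    rw [mem_ball_iff_norm, add_sub_cancel_left, norm_smul]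
    linarith
  have hdl : DiffContOnCl ℂ (fun a : ℂ => F (y + a • u)) (Metric.ball 0 (r / ‖u‖)) := by
    apply DifferentiableOn.diffContOnCl
    rw [closure_ball _ (by positivity)]
    exact hd.comp (g := F) (f := fun a : ℂ => y + a • u) (by fun_prop)
      (fun a ha => hin a (by simpa using ha))
  have := Complex.norm_deriv_le_of_forall_mem_sphere_norm_le (C := M) (by positivity) hdl
    (fun a ha => hb _ (hin a (by simpa using (mem_sphere_zero_iff_norm.1 ha).le)))
  rw [hder.deriv] at this
  refine this.trans (le_of_eq ?_)
  field_simp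

lemma aux_local {n : ℕ} (F : (Fin n → ℂ) → ℂ) (S : Set (Fin n → ℂ)) (hSo : IsOpen S)
    (hF : DifferentiableOn ℂ F S) (z₀ v : Fin n → ℂ) (hv : ‖v‖ ≤ 1) (ε M : ℝ) (hε : 0 < ε)
    (hb : ∀ x ∈ Metric.ball z₀ ε ∩ S, ‖F x‖ ≤ M)
    (hfin : ∀ z ∈ Metric.ball z₀ ε, {a : ℂ | a ∈ Metric.ball 0 (ε / 2) ∧ z + a • v ∉ S}.Finite) :
    ∃ δ > 0, ∃ g : (Fin n → ℂ) → ℂ, DifferentiableOn ℂ g (Metric.ball z₀ δ) ∧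
      ∀ z ∈ Metric.ball z₀ δ ∩ S, g z = F z := by
  have hfin0 := hfin z₀ (by simpa using hε)
  obtain ⟨R, hR, hRn⟩ := ((Set.Ioo_infinite (half_pos hε)).sdiff (hfin0.image norm)).nonempty
  have hR0 : 0 < R := hR.1
  have hRε : R < ε / 2 := hR.2
  set K : Set (Fin n → ℂ) := (fun a : ℂ => z₀ + a • v) '' Metric.sphere 0 R with hK
  have hKc : IsCompact K := (isCompact_sphere 0 R).image (by fun_prop)
  have hsm : ∀ a : ℂ, ‖a • v‖ ≤ ‖a‖ := fun a => by
    rw [norm_smul]; exact mul_le_of_le_one_right (norm_nonneg _) hv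
  have hKS : K ⊆ Metric.ball z₀ ε ∩ S := by
    rintro _ ⟨a, ha, rfl⟩
    have ha' : ‖a‖ = R := mem_sphere_zero_iff_norm.1 ha
    refine ⟨?_, ?_⟩
    · rw [mem_ball_iff_norm, add_sub_cancel_left]
      linarith [hsm a]
    · by_contra hcon
      exact hRn ⟨a, ⟨by simpa [ha'] using hRε, hcon⟩, ha'⟩
  obtain ⟨δ, hδ, hδK⟩ := hKc.exists_thickening_subset_open (Metric.isOpen_ball.inter hSo) hKS
  set η := min (δ / 2) (ε / 2) with hη
  have hη0 : 0 < η := by positivity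
  have hηδ : η ≤ δ / 2 := min_le_left _ _
  have hηε : η ≤ ε / 2 := min_le_right _ _
  have hin : ∀ x ∈ Metric.ball z₀ η, ∀ a ∈ Metric.sphere (0:ℂ) R,
      Metric.ball (x + a • v) (2 * (δ / 4)) ⊆ Metric.ball z₀ ε ∩ S := by
    intro x hx a ha y hy
    apply hδK
    rw [Metric.mem_thickening_iff]
    refine ⟨_, ⟨a, ha, rfl⟩, ?_⟩
    have : dist (x + a • v) (z₀ + a • v) = dist x z₀ := by simp
    have h3 := dist_triangle y (x + a • v) (z₀ + a • v)
    rw [Metric.mem_ball] at hx hy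
    dsimp only
    linarith
  have hin' : ∀ x ∈ Metric.ball z₀ η, ∀ a ∈ Metric.sphere (0:ℂ) R,
      x + a • v ∈ Metric.ball z₀ ε ∩ S := fun x hx a ha =>
    hin x hx a ha (Metric.mem_ball_self (by positivity))
  refine ⟨η, hη0, fun z => Real.circleAverage (fun a => F (z + a • v)) 0 R, ?_, ?_⟩
  · intro z hz
    apply DifferentiableAt.differentiableWithinAt
    simp only [Real.circleAverage_def]
    apply DifferentiableAt.const_smul
    simp only [intervalIntegral.integral_of_le Real.two_pi_pos.le]
    have hcm : ∀ θ : ℝ, circleMap 0 R θ ∈ Metric.sphere (0:ℂ) R := fun θ =>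
      circleMap_mem_sphere 0 hR0.le θ
    have hFd : ∀ x ∈ S, DifferentiableAt ℂ F x := fun x hx => hF.differentiableAt (hSo.mem_nhds hx)
    have hcont : ∀ x ∈ Metric.ball z₀ η, Continuous (fun θ : ℝ => F (x + circleMap 0 R θ • v)) := by
      intro x hx
      rw [continuous_iff_continuousAt]
      intro θ
      have h1 : ContinuousAt F (x + circleMap 0 R θ • v) := (hFd _ (hin' x hx _ (hcm θ)).2).continuousAt
      have h2 : ContinuousAt (fun θ : ℝ => x + circleMap 0 R θ • v) θ := by
        have := continuous_circleMap 0 R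
        fun_prop
      exact ContinuousAt.comp (f := fun θ : ℝ => x + circleMap 0 R θ • v) h1 h2
    have := hasFDerivAt_integral_of_dominated_of_fderiv_le (𝕜 := ℂ)
      (μ := volume.restrict (Set.Ioc 0 (2 * Real.pi))) (x₀ := z) (s := Metric.ball z₀ η)
      (F := fun x θ => F (x + circleMap 0 R θ • v))
      (F' := fun x θ => fderiv ℂ F (x + circleMap 0 R θ • v)) (bound := fun _ => M / (δ / 4))
      (Metric.isOpen_ball.mem_nhds hz) ?_ ?_ ?_ ?_ ?_ ?_
    · exact this.differentiableAt
    · filter_upwards [Metric.isOpen_ball.mem_nhds hz] with x hx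
      exact (hcont x hx).aestronglyMeasurable
    · exact ((hcont z hz).integrableOn_Icc).mono_set Set.Ioc_subset_Icc_self
    · apply Measurable.aestronglyMeasurable
      apply (measurable_fderiv ℂ F).comp
      have := continuous_circleMap 0 R
      apply Continuous.measurable
      fun_prop
    · filter_upwards with θ x hx
      have := hin x hx _ (hcm θ)
      exact aux_fderiv F _ (δ / 4) M (by positivity)
        (hF.mono (this.trans Set.inter_subset_right)) (fun y hy => hb y (this hy))
    · exact integrable_const _
    · filter_upwards with θ x hx
      have h1 := (hFd _ (hin' x hx _ (hcm θ)).2).hasFDerivAt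
      have h2 : HasFDerivAt (fun x : Fin n → ℂ => x + circleMap 0 R θ • v)
          (ContinuousLinearMap.id ℂ (Fin n → ℂ)) x := (hasFDerivAt_id x).add_const _
      simpa [Function.comp_def] using h1.comp x h2
  · rintro z ⟨hz, hzS⟩
    have hzε : z ∈ Metric.ball z₀ ε := Metric.ball_subset_ball (by linarith) hz
    have hsub : ∀ a ∈ Metric.ball (0:ℂ) (ε / 2) \ {a : ℂ | a ∈ Metric.ball 0 (ε / 2) ∧ z + a • v ∉ S},
        z + a • v ∈ Metric.ball z₀ ε ∩ S := by
      rintro a ⟨ha, ha2⟩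
      constructor
      · rw [Metric.mem_ball] at hz ⊢
        have h1 : dist (z + a • v) z ≤ ‖a‖ := by simpa [dist_eq_norm] using hsm a
        have h2 : ‖a‖ < ε / 2 := by simpa using ha
        have h3 := dist_triangle (z + a • v) z z₀
        linarith
      · by_contra hcon
        exact ha2 ⟨ha, hcon⟩
    have := aux_mean (fun a => F (z + a • v)) R (ε / 2) M hR0 hRε _ (hfin z hzε) ?_ ?_ ?_ ?_
    · simpa using this
    · simp [hzS]
    · rintro a ha ⟨-, h2⟩
      exact h2 (hin' z hz a ha).2
    · exact hF.comp (g := F) (f := fun a : ℂ => z + a • v) (by fun_prop) (fun a ha => (hsub a ha).2)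
    · intro a ha
      exact hb _ (hsub a ha)

lemma aux_global {n : ℕ} (F : (Fin n → ℂ) → ℂ) (S D : Set (Fin n → ℂ)) (hSo : IsOpen S)
    (hF : DifferentiableOn ℂ F S) (hDS : D ⊆ closure S) (hDo : IsOpen D)
    (hloc : ∀ z₀ ∈ D, ∃ δ > 0, ∃ g : (Fin n → ℂ) → ℂ, DifferentiableOn ℂ g (Metric.ball z₀ δ) ∧
      ∀ z ∈ Metric.ball z₀ δ ∩ S, g z = F z) :
    ∃ g : (Fin n → ℂ) → ℂ, DifferentiableOn ℂ g D ∧ ∀ z ∈ S, g z = F z := by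
  refine ⟨fun z => Filter.limUnder (nhdsWithin z S) F, ?_, ?_⟩
  · intro z₀ hz₀
    apply DifferentiableAt.differentiableWithinAt
    obtain ⟨δ, hδ, g, hg, hgF⟩ := hloc z₀ hz₀
    have hnh := Metric.ball_mem_nhds z₀ hδ
    refine (hg.differentiableAt hnh).congr_of_eventuallyEq ?_
    filter_upwards [hnh, hDo.mem_nhds hz₀] with z hz hzD
    have : (nhdsWithin z S).NeBot := mem_closure_iff_nhdsWithin_neBot.1 (hDS hzD)
    have hzn := Metric.isOpen_ball.mem_nhds hz
    apply Filter.Tendsto.limUnder_eq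
    have hc : Filter.Tendsto g (nhdsWithin z S) (nhds (g z)) :=
      (hg.differentiableAt hzn).continuousAt.tendsto.mono_left nhdsWithin_le_nhds
    refine hc.congr' ?_
    filter_upwards [nhdsWithin_le_nhds hzn, self_mem_nhdsWithin] with x hx hxS
    exact hgF x ⟨hx, hxS⟩
  · intro z hz
    have : (nhdsWithin z S).NeBot := mem_closure_iff_nhdsWithin_neBot.1 (subset_closure hz)
    exact (hF.continuousOn z hz).tendsto.limUnder_eq

lemma aux_bound (n l : ℕ) (p C : ℝ) (hp : 0 < p) (hC : 0 < C)
    (f : (Fin n → ℂ) → ℂ)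
    (S : Set (Fin n → ℂ))
    (hS : S = {z | ∀ i : Fin n, ‖z i‖ < 1 ∧ ((i : ℕ) < l → z i ≠ 0)}) (hSo : IsOpen S)
    (hf : DifferentiableOn ℂ f S)
    (hint : ∫⁻ z in S, ENNReal.ofReal (‖f z‖ ^ p) ≤ ENNReal.ofReal C) (z : Fin n → ℂ) (hz : z ∈ S) :
    ‖(∏ i ∈ Finset.univ.filter (fun i : Fin n => (i : ℕ) < l), z i) ^
            (⌈(2 : ℝ) / p⌉₊) * f z‖ ≤ (C / ∏ i, ((1 - ‖z i‖) ^ 2 * Real.pi)) ^ (1 / p) := by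
  have hpi := Real.pi_pos
  have hz' : ∀ i : Fin n, ‖z i‖ < 1 ∧ ((i : ℕ) < l → z i ≠ 0) := by rw [hS] at hz; exact hz
  set q : Fin n → ℝ := fun i => if (i : ℕ) < l then ‖z i‖ else 1 with hq
  have hq0 : ∀ i, 0 < q i := by
    intro i
    simp only [hq]
    split_ifs with h
    · exact norm_pos_iff.2 ((hz' i).2 h)
    · exact one_pos
  have hq1 : ∀ i, q i ≤ 1 := by
    intro i
    simp only [hq]
    split_ifs with h
    · exact (hz' i).1.le
    · exact le_rfl
  have h1z : ∀ i, 0 < 1 - ‖z i‖ := fun i => sub_pos.2 (hz' i).1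
  set r : Fin n → ℝ := fun i => (1 - ‖z i‖) * q i with hr
  have hr0 : ∀ i, 0 < r i := fun i => mul_pos (h1z i) (hq0 i)
  set P : Set (Fin n → ℂ) := Set.pi Set.univ (fun i => Metric.ball (0:ℂ) (r i)) with hP
  have hvol := aux_vol p hp f S hSo hf z P ?_ ?_ ?_
  rotate_left
  · exact MeasurableSet.univ_pi fun i => measurableSet_ball
  · intro a ha w hw i _
    have : ‖w i‖ < r i := by simpa using hw i trivial
    simp only [mem_ball_zero_iff, Pi.smul_apply, smul_eq_mul, norm_mul]
    exact (mul_le_of_le_one_left (norm_nonneg _) ha).trans_lt this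
  · intro w hw
    rw [hS]
    intro i
    have hwi : ‖w i‖ < (1 - ‖z i‖) * q i := by simpa using hw i trivial
    have h1 : (1 - ‖z i‖) * q i ≤ 1 - ‖z i‖ := mul_le_of_le_one_right (h1z i).le (hq1 i)
    constructor
    · have := norm_add_le (z i) (w i)
      simp only [Pi.add_apply]; linarith
    · intro hi h0
      have hqi : q i = ‖z i‖ := by simp [hq, hi]
      have h2 : (1 - ‖z i‖) * q i ≤ ‖z i‖ := by
        rw [hqi]; exact mul_le_of_le_one_left (norm_nonneg _) (by linarith [norm_nonneg (z i)])
      have h3 : z i = - w i := eq_neg_of_add_eq_zero_left h0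
      have : ‖z i‖ = ‖w i‖ := by rw [h3, norm_neg]
      linarith
  have hvP : volume P = ENNReal.ofReal (∏ i, (r i ^ 2 * Real.pi)) := by
    rw [hP, volume_pi_pi, ENNReal.ofReal_prod_of_nonneg (fun i _ => by positivity)]
    refine Finset.prod_congr rfl fun i _ => ?_
    rw [Complex.volume_ball, ENNReal.ofReal_mul (p := r i ^ 2) (by positivity),
      ENNReal.ofReal_pow (hr0 i).le]
    congr 1
    rw [← NNReal.coe_real_pi, ENNReal.ofReal_coe_nnreal]
  have hvol2 := hvol.trans hint
  rw [hvP, ← ENNReal.ofReal_mul (Finset.prod_nonneg fun i _ => by positivity),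
    ENNReal.ofReal_le_ofReal_iff hC.le] at hvol2
  have hprod : ∏ i, (r i ^ 2 * Real.pi) = (∏ i, q i) ^ 2 * ∏ i, ((1 - ‖z i‖) ^ 2 * Real.pi) := by
    rw [← Finset.prod_pow, ← Finset.prod_mul_distrib]
    refine Finset.prod_congr rfl fun i _ => ?_
    simp only [hr]; ring
  have hQ : ‖∏ i ∈ Finset.univ.filter (fun i : Fin n => (i : ℕ) < l), z i‖ = ∏ i, q i := by
    rw [norm_prod, Finset.prod_filter]
  have hQ0 : 0 < ∏ i, q i := Finset.prod_pos fun i _ => hq0 i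
  have hQ1 : ∏ i, q i ≤ 1 := Finset.prod_le_one (fun i _ => (hq0 i).le) fun i _ => hq1 i
  have hB : 0 < ∏ i, ((1 - ‖z i‖) ^ 2 * Real.pi) := Finset.prod_pos fun i _ => by
    have := h1z i; positivity
  rw [hprod] at hvol2
  rw [norm_mul, norm_pow, hQ]
  set Q := ∏ i, q i
  set B := ∏ i, ((1 - ‖z i‖) ^ 2 * Real.pi)
  rw [one_div, Real.le_rpow_inv_iff_of_pos (by positivity) (by positivity) hp,
    Real.mul_rpow (by positivity) (norm_nonneg _), le_div_iff₀ hB]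
  have hk : (Q ^ ⌈2 / p⌉₊) ^ p ≤ Q ^ 2 := by
    rw [← Real.rpow_natCast, ← Real.rpow_mul hQ0.le, ← Real.rpow_natCast Q 2]
    apply Real.rpow_le_rpow_of_exponent_ge hQ0 hQ1
    have := Nat.le_ceil (2 / p)
    rw [div_le_iff₀ hp] at this
    exact_mod_cast this
  calc (Q ^ ⌈2 / p⌉₊) ^ p * ‖f z‖ ^ p * B ≤ Q ^ 2 * ‖f z‖ ^ p * B := by gcongr
    _ = Q ^ 2 * B * ‖f z‖ ^ p := by ring
    _ ≤ C := hvol2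

/-- A holomorphic function on a product of punctured disks and disks with `∫ |f|^p ≤ C`
extends meromorphically: `(z₁⋯z_ℓ)^⌈2/p⌉ · f` extends holomorphically to the polydisk. -/
theorem stmt_0 (n l : ℕ) (hl : l ≤ n) (p C : ℝ) (hp : 0 < p) (hC : 0 < C)
    (f : (Fin n → ℂ) → ℂ)
    (S : Set (Fin n → ℂ))
    (hS : S = {z | ∀ i : Fin n, ‖z i‖ < 1 ∧ ((i : ℕ) < l → z i ≠ 0)})
    (hf : DifferentiableOn ℂ f S)
    (hint : ∫⁻ z in S, ENNReal.ofReal (‖f z‖ ^ p) ≤ ENNReal.ofReal C) :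
    ∃ g : (Fin n → ℂ) → ℂ,
      DifferentiableOn ℂ g {z | ∀ i : Fin n, ‖z i‖ < 1} ∧
      ∀ z ∈ S,
        g z = (∏ i ∈ Finset.univ.filter (fun i : Fin n => (i : ℕ) < l), z i) ^
            (⌈(2 : ℝ) / p⌉₊) * f z := by
  have hpi := Real.pi_pos
  set D : Set (Fin n → ℂ) := {z | ∀ i : Fin n, ‖z i‖ < 1} with hD
  have hDo : IsOpen D := by
    rw [hD, Set.ofPred_forall]
    exact isOpen_iInter_of_finite fun i => isOpen_lt (by fun_prop) (by fun_prop)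
  have hSo : IsOpen S := by
    rw [hS, Set.ofPred_forall]
    refine isOpen_iInter_of_finite fun i => ?_
    rw [Set.ofPred_and]
    refine (isOpen_lt (by fun_prop) (by fun_prop)).inter ?_
    by_cases hi : (i : ℕ) < l
    · simp only [hi, true_imp_iff]
      exact isOpen_ne_fun (by fun_prop) (by fun_prop)
    · simp [hi]
  -- finiteness along the diagonal
  have hfin : ∀ z : Fin n → ℂ, {a : ℂ | z + a • (1 : Fin n → ℂ) ∈ D ∧ z + a • (1 : Fin n → ℂ) ∉ S}.Finite := by
    intro z
    refine (Set.finite_range (fun i : Fin n => - z i)).subset ?_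
    rintro a ⟨haD, haS⟩
    by_contra hcon
    apply haS
    rw [hS]
    intro i
    refine ⟨haD i, fun _ h0 => hcon ⟨i, ?_⟩⟩
    have h0' : z i + a = 0 := by simpa using h0
    exact (eq_neg_of_add_eq_zero_right h0').symm
  have hv : ‖(1 : Fin n → ℂ)‖ ≤ 1 := by
    rw [pi_norm_le_iff_of_nonneg zero_le_one]; simp
  set F : (Fin n → ℂ) → ℂ := fun z =>
    (∏ i ∈ Finset.univ.filter (fun i : Fin n => (i : ℕ) < l), z i) ^ (⌈(2 : ℝ) / p⌉₊) * f z with hFdef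
  have hF : DifferentiableOn ℂ F S := by
    apply DifferentiableOn.mul _ hf
    apply DifferentiableOn.pow
    apply Differentiable.differentiableOn
    fun_prop
  have hbd := aux_bound n l p C hp hC f S hS hSo hf hint
  refine aux_global F S D hSo hF ?_ hDo ?_
  · intro z hz
    have ht : Filter.Tendsto (fun a : ℂ => z + a • (1 : Fin n → ℂ)) (nhdsWithin 0 {0}ᶜ) (nhds z) := by
      have : Continuous (fun a : ℂ => z + a • (1 : Fin n → ℂ)) := by fun_prop
      have h := this.tendsto 0
      simp only [zero_smul, add_zero] at h
      exact h.mono_left nhdsWithin_le_nhds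
    refine mem_closure_of_tendsto ht ?_
    have h1 := (hfin z).isClosed.isOpen_compl
    have h2 : ∀ᶠ a in nhdsWithin (0:ℂ) {0}ᶜ, a ∉ {a : ℂ | z + a • (1 : Fin n → ℂ) ∈ D ∧ z + a • (1 : Fin n → ℂ) ∉ S} := by
      have := ((hfin z).subset (Set.sdiff_subset (t := {0}))).isClosed.isOpen_compl.mem_nhds (x := 0) (by simp)
      filter_upwards [nhdsWithin_le_nhds this, self_mem_nhdsWithin] with a ha ha0 hcon
      exact ha ⟨hcon, ha0⟩
    filter_upwards [h2, ht (hDo.mem_nhds hz)] with a ha haD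
    by_contra hcon
    exact ha ⟨haD, hcon⟩
  · intro z₀ hz₀
    have hcB : ContinuousAt (fun z : Fin n → ℂ => (C / ∏ i, ((1 - ‖z i‖) ^ 2 * Real.pi)) ^ (1 / p)) z₀ := by
      apply ContinuousAt.rpow_const
      · apply ContinuousAt.div continuousAt_const
        · apply Continuous.continuousAt; fun_prop
        · refine Finset.prod_ne_zero_iff.2 fun i _ => ?_
          have : 0 < 1 - ‖z₀ i‖ := sub_pos.2 (hz₀ i)
          positivity
      · right; positivity
    have hev := hcB.eventually (gt_mem_nhds (lt_add_one _))
    obtain ⟨ε, hε, hball⟩ := Metric.eventually_nhds_iff_ball.1 (hev.and (hDo.mem_nhds hz₀))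
    refine aux_local F S hSo hF z₀ 1 hv (ε / 2)
      ((C / ∏ i, ((1 - ‖z₀ i‖) ^ 2 * Real.pi)) ^ (1 / p) + 1) (half_pos hε) ?_ ?_
    · rintro x ⟨hx, hxS⟩
      exact (hbd x hxS).trans (hball x (Metric.ball_subset_ball (by linarith) hx)).1.le
    · intro z hz
      refine (hfin z).subset ?_
      rintro a ⟨ha, haS⟩
      refine ⟨(hball _ ?_).2, haS⟩
      rw [Metric.mem_ball] at hz ⊢
      have h1 : dist (z + a • (1 : Fin n → ℂ)) z ≤ ‖a‖ := by
        rw [dist_eq_norm, add_sub_cancel_left, norm_smul]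
        exact mul_le_of_le_one_right (norm_nonneg _) hv
      have h2 : ‖a‖ < ε / 2 / 2 := by simpa using ha
      have h3 := dist_triangle (z + a • (1 : Fin n → ℂ)) z z₀
      linarith
end

section
/- Let δ : Δ* → [0,∞) be a continuous subharmonic function on the punctured unit disk such that for every ε > 0, lim_{|z|→0} (δ(z) + ε log|z|) = −∞. Then δ extends to a subharmonic function on the full disk Δ, and consequently satisfies the maximum principle: sup_{Δ_{1/2}} δ ≤ sup_{|z|=1/2} δ. -/
open Metric MeasureTheory

/-- `f` is subharmonic on `s`: upper semicontinuous and satisfying the sub-mean-value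
inequality on every closed disk contained in `s`. -/
def SubhOn (f : ℂ → ℝ) (s : Set ℂ) : Prop :=
  UpperSemicontinuousOn f s ∧ ∀ z : ℂ, ∀ ρ : ℝ, 0 < ρ → closedBall z ρ ⊆ s →
    f z ≤ (2 * Real.pi)⁻¹ *
      ∫ θ in (0:ℝ)..(2 * Real.pi), f (z + ρ * Complex.exp (θ * Complex.I))

lemma approx_span (f : C(AddCircle (1:ℝ), ℂ))
    (hf : f ∈ Submodule.span ℂ (Set.range (@fourier (1:ℝ)))) :
    ∃ P Q : ℂ → ℂ, Differentiable ℂ P ∧ Differentiable ℂ Q ∧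
      ∀ x, f x = P (AddCircle.toCircle x) + (starRingEnd ℂ) (Q (AddCircle.toCircle x)) := by
  induction hf using Submodule.span_induction with
  | mem f h =>
    obtain ⟨n, rfl⟩ := h
    rcases le_total 0 n with hn | hn
    · lift n to ℕ using hn
      refine ⟨fun z => z ^ n, fun _ => 0, by fun_prop, by fun_prop, fun x => ?_⟩
      simp [fourier_apply, AddCircle.toCircle_nsmul]
    · obtain ⟨m, rfl⟩ := Int.exists_eq_neg_ofNat hn
      refine ⟨fun _ => 0, fun z => z ^ m, by fun_prop, by fun_prop, fun x => ?_⟩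
      rw [fourier_neg]
      simp [fourier_apply, AddCircle.toCircle_nsmul]
  | zero => exact ⟨fun _ => 0, fun _ => 0, by fun_prop, by fun_prop, by simp⟩
  | add f g _ _ hf hg =>
    obtain ⟨P, Q, hP, hQ, h⟩ := hf
    obtain ⟨P', Q', hP', hQ', h'⟩ := hg
    refine ⟨fun z => P z + P' z, fun z => Q z + Q' z, by fun_prop, by fun_prop, fun x => ?_⟩
    simp only [ContinuousMap.add_apply, h, h', map_add]; ring
  | smul a f _ hf =>
    obtain ⟨P, Q, hP, hQ, h⟩ := hf
    refine ⟨fun z => a * P z, fun z => (starRingEnd ℂ a) * Q z, by fun_prop, by fun_prop,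
      fun x => ?_⟩
    simp only [ContinuousMap.smul_apply, h, map_mul, smul_eq_mul, Complex.conj_conj]; ring

lemma approx_harm (f : ℂ → ℝ) (c : ℂ) (ρ : ℝ) (hρ : 0 < ρ) (hf : ContinuousOn f (sphere c ρ))
    (η : ℝ) (hη : 0 < η) :
    ∃ h : ℂ → ℝ, InnerProductSpace.HarmonicOnNhd h Set.univ ∧
      ∀ z ∈ sphere c ρ, |f z - h z| < η := by
  have hmem : ∀ x : AddCircle (1:ℝ), c + ρ * (AddCircle.toCircle x : ℂ) ∈ sphere c ρ := by
    intro x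
    have := Circle.norm_coe (AddCircle.toCircle x)
    simp [abs_of_pos hρ, this]
  let F : C(AddCircle (1:ℝ), ℂ) :=
    ⟨fun x => (f (c + ρ * (AddCircle.toCircle x : ℂ)) : ℂ), by
      refine Complex.continuous_ofReal.comp (hf.comp_continuous ?_ hmem)
      have := AddCircle.continuous_toCircle (T := (1:ℝ))
      fun_prop⟩
  have hF : F ∈ (Submodule.span ℂ (Set.range (@fourier (1:ℝ)))).topologicalClosure := by
    rw [span_fourier_closure_eq_top]; trivial
  obtain ⟨G, hG, hGF⟩ := Metric.mem_closure_iff.1 hF η hη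
  obtain ⟨P, Q, hP, hQ, h⟩ := approx_span G hG
  refine ⟨fun z => (P ((z - c) / ρ) + Q ((z - c) / ρ)).re, fun z _ => ?_, fun z hz => ?_⟩
  · apply AnalyticAt.harmonicAt_re
    have : Differentiable ℂ (fun z : ℂ => P ((z - c) / ρ) + Q ((z - c) / ρ)) := by
      have h1 : Differentiable ℂ (fun z : ℂ => (z - c) / ρ) := by fun_prop
      exact (hP.comp h1).add (hQ.comp h1)
    exact this.analyticAt z
  · have hu : ‖(z - c) / ρ‖ = 1 := by
      rw [mem_sphere_iff_norm] at hz
      simp [hz, abs_of_pos hρ, hρ.ne']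
    obtain ⟨x, hx⟩ := (AddCircle.homeomorphCircle (T := (1:ℝ)) one_ne_zero).surjective
      ⟨(z - c) / ρ, mem_sphere_zero_iff_norm.2 hu⟩
    have hx' : (AddCircle.toCircle x : ℂ) = (z - c) / ρ := by
      have := congrArg (fun w : Circle => (w : ℂ)) hx
      rw [AddCircle.homeomorphCircle_apply] at this
      simpa using this
    have hd := (ContinuousMap.dist_lt_iff hη).1 hGF x
    have hFx : F x = (f z : ℂ) := by
      simp only [F, ContinuousMap.coe_mk, hx']
      congr 2
      have : (ρ : ℂ) ≠ 0 := by exact_mod_cast hρ.ne'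
      field_simp
      ring
    rw [hFx, h x, hx', Complex.dist_eq] at hd
    refine lt_of_eq_of_lt ?_ (lt_of_le_of_lt (Complex.abs_re_le_norm _) hd)
    simp

lemma max_aux (v : ℂ → ℝ) (c : ℂ) (ρ : ℝ)
    (hv : ContinuousOn v (closedBall c ρ \ {0}))
    (hlim : Filter.Tendsto v (nhdsWithin 0 {z : ℂ | z ≠ 0}) Filter.atBot)
    (hb : ∀ z ∈ sphere c ρ, z ≠ 0 → v z ≤ 0)
    (hm : ∀ z r, 0 < r → closedBall z r ⊆ ball c ρ \ {0} → v z ≤ Real.circleAverage v z r) :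
    ∀ z ∈ closedBall c ρ \ {0}, v z ≤ 0 := by
  intro z0 hz0
  by_contra! hpos
  have h1 := hlim.eventually (Filter.eventually_lt_atBot (v z0))
  rw [eventually_nhdsWithin_iff, Metric.eventually_nhds_iff_ball] at h1
  obtain ⟨r, hr, h1⟩ := h1
  have hKsub : closedBall c ρ \ ball 0 r ⊆ closedBall c ρ \ {0} := by
    intro z hz
    refine ⟨hz.1, fun h => hz.2 ?_⟩
    rw [Set.mem_singleton_iff.1 h]; exact mem_ball_self hr
  have hcomp : IsCompact (closedBall c ρ \ ball (0:ℂ) r) :=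
    (isCompact_closedBall c ρ).diff isOpen_ball
  have hz0K : z0 ∈ closedBall c ρ \ ball 0 r :=
    ⟨hz0.1, fun h => lt_irrefl _ (h1 z0 h hz0.2)⟩
  obtain ⟨z1, hz1, hmax⟩ := hcomp.exists_isMaxOn ⟨z0, hz0K⟩ (hv.mono hKsub)
  have hm0 : v z0 ≤ v z1 := hmax hz0K
  have hle : ∀ z ∈ closedBall c ρ \ {0}, v z ≤ v z1 := by
    intro z hz
    by_cases hzr : z ∈ ball (0:ℂ) r
    · exact (h1 z hzr hz.2).le.trans hm0
    · exact hmax ⟨hz.1, hzr⟩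
  have hS : IsCompact ((closedBall c ρ \ ball (0:ℂ) r) ∩ v ⁻¹' {v z1}) :=
    hcomp.of_isClosed_subset ((hv.mono hKsub).preimage_isClosed_of_isClosed hcomp.isClosed
      isClosed_singleton) Set.inter_subset_left
  obtain ⟨z2, hz2, hre⟩ := hS.exists_isMaxOn ⟨z1, hz1, rfl⟩ Complex.continuous_re.continuousOn
  have hz2v : v z2 = v z1 := hz2.2
  have hz20 : z2 ≠ 0 := (hKsub hz2.1).2
  have hz2b : z2 ∈ ball c ρ := by
    rcases (mem_closedBall.1 hz2.1.1).lt_or_eq with h | h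
    · exact h
    · have := hb z2 h hz20
      linarith
  have hopen : IsOpen (ball c ρ \ {(0:ℂ)}) := isOpen_ball.sdiff isClosed_singleton
  obtain ⟨s, hs, hsub⟩ := Metric.nhds_basis_closedBall.mem_iff.1 (hopen.mem_nhds ⟨hz2b, hz20⟩)
  have hcirc : ∀ θ, circleMap z2 s θ ∈ closedBall c ρ \ {(0:ℂ)} := fun θ =>
    have := hsub (sphere_subset_closedBall (circleMap_mem_sphere z2 hs.le θ))
    ⟨ball_subset_closedBall this.1, this.2⟩
  have havg := hm z2 s hs hsub
  have hlt : ∫ θ in (0:ℝ)..(2 * Real.pi), v (circleMap z2 s θ) <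
      ∫ θ in (0:ℝ)..(2 * Real.pi), v z1 := by
    apply intervalIntegral.integral_lt_integral_of_continuousOn_of_le_of_exists_lt
      Real.two_pi_pos
    · exact (hv.comp_continuous (continuous_circleMap z2 s) hcirc).continuousOn
    · exact continuousOn_const
    · exact fun x _ => hle _ (hcirc x)
    · refine ⟨0, ⟨le_rfl, Real.two_pi_pos.le⟩, lt_of_le_of_ne (hle _ (hcirc 0)) fun heq => ?_⟩
      have hnb : circleMap z2 s 0 ∉ ball (0:ℂ) r := by
        intro h
        have := h1 _ h (hcirc 0).2
        linarith
      have := hre (show circleMap z2 s 0 ∈ _ from ⟨⟨(hcirc 0).1, hnb⟩, heq⟩)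
      simp [circleMap] at this
      linarith
  rw [Real.circleAverage_def, smul_eq_mul, hz2v] at havg
  rw [intervalIntegral.integral_const, smul_eq_mul, sub_zero] at hlt
  have hp := Real.two_pi_pos
  rw [inv_mul_eq_div, le_div_iff₀ hp] at havg
  linarith

/-- The hypotheses of the theorem give a harmonic majorant principle on disks around the puncture. -/
lemma majorant (δ : ℂ → ℝ)
    (hcont : ContinuousOn δ (ball (0:ℂ) 1 \ {0}))
    (hsub : ∀ z : ℂ, ∀ ρ : ℝ, 0 < ρ → closedBall z ρ ⊆ ball (0:ℂ) 1 \ {0} →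
      δ z ≤ Real.circleAverage δ z ρ)
    (hgrowth : ∀ ε > (0:ℝ), Filter.Tendsto (fun z : ℂ => δ z + ε * Real.log ‖z‖)
      (nhdsWithin 0 {z : ℂ | z ≠ 0}) Filter.atBot)
    (c : ℂ) (ρ : ℝ) (hD : closedBall c ρ ⊆ ball (0:ℂ) 1)
    (h : ℂ → ℝ) (hh : InnerProductSpace.HarmonicOnNhd h Set.univ)
    (hb : ∀ z ∈ sphere c ρ, z ≠ 0 → δ z ≤ h z) :
    ∀ z ∈ closedBall c ρ, z ≠ 0 → δ z ≤ h z := by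
  have hhc : Continuous h := continuousOn_univ.1 hh.continuousOn
  have key : ∀ ε > (0:ℝ), ∀ z ∈ closedBall c ρ \ {0}, δ z + ε * Real.log ‖z‖ - h z ≤ 0 := by
    intro ε hε
    have hlogc : ContinuousOn (fun z : ℂ => ε * Real.log ‖z‖ - h z) {0}ᶜ := by
      refine ContinuousOn.sub (continuousOn_const.mul ?_) hhc.continuousOn
      exact continuous_norm.continuousOn.log fun z hz => norm_ne_zero_iff.2 hz
    have hcv : ContinuousOn (fun z => δ z + ε * Real.log ‖z‖ - h z) (ball (0:ℂ) 1 \ {0}) := by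
      simp only [add_sub_assoc]
      exact hcont.add (hlogc.mono fun z hz => hz.2)
    apply max_aux _ c ρ
    · exact hcv.mono (Set.sdiff_subset_sdiff_left hD)
    · have h0 : Filter.Tendsto h (nhdsWithin 0 {z : ℂ | z ≠ 0}) (nhds (h 0)) :=
        hhc.continuousAt.mono_left nhdsWithin_le_nhds
      simpa only [sub_eq_add_neg] using (hgrowth ε hε).atBot_add h0.neg
    · intro z hz hz0
      have h1 := hb z hz hz0
      have hz1 : ‖z‖ < 1 := mem_ball_zero_iff.1 (hD (sphere_subset_closedBall hz))
      have h2 : Real.log ‖z‖ ≤ 0 := Real.log_nonpos (norm_nonneg _) hz1.le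
      nlinarith
    · intro z r hr hzr
      have hsubs : closedBall z r ⊆ ball (0:ℂ) 1 \ {0} := fun w hw =>
        ⟨hD (ball_subset_closedBall (hzr hw).1), (hzr hw).2⟩
      have hharm : InnerProductSpace.HarmonicOnNhd (fun z : ℂ => ε * Real.log ‖z‖ - h z)
          (closedBall z |r|) := by
        intro w hw
        rw [abs_of_pos hr] at hw
        have ha : InnerProductSpace.HarmonicAt (fun z : ℂ => Real.log ‖z‖) w :=
          AnalyticAt.harmonicAt_log_norm (f := fun z => z) analyticAt_id (hsubs hw).2
        exact (ha.const_smul (c := ε)).sub (hh w trivial)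
      have hsph : sphere z |r| ⊆ ball (0:ℂ) 1 \ {0} := by
        rw [abs_of_pos hr]; exact sphere_subset_closedBall.trans hsubs
      have e1 : Real.circleAverage (fun z => δ z + (ε * Real.log ‖z‖ - h z)) z r
          = Real.circleAverage δ z r + Real.circleAverage (fun z => ε * Real.log ‖z‖ - h z) z r :=
        Real.circleAverage_fun_add (hcont.mono hsph).circleIntegrable'
          (hharm.continuousOn.mono sphere_subset_closedBall).circleIntegrable'
      rw [hharm.circleAverage_eq] at e1
      simp only [add_sub_assoc]
      rw [e1]
      have := hsub z r hr hsubs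
      linarith
  intro z hz hz0
  have hlim : Filter.Tendsto (fun ε : ℝ => δ z + ε * Real.log ‖z‖ - h z)
      (nhdsWithin 0 (Set.Ioi 0)) (nhds (δ z + 0 * Real.log ‖z‖ - h z)) := by
    apply Filter.Tendsto.mono_left _ nhdsWithin_le_nhds
    apply Continuous.tendsto
    fun_prop
  have := le_of_tendsto hlim (by
    filter_upwards [self_mem_nhdsWithin] with ε hε
    exact key ε hε z ⟨hz, hz0⟩)
  linarith

/-- A continuous nonnegative subharmonic function on the punctured unit disk with
sub-logarithmic growth at the puncture extends subharmonically across the puncture,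
and hence satisfies the maximum principle `sup_{Δ_{1/2}} δ ≤ sup_{|z|=1/2} δ`. -/
theorem stmt_13 (δ : ℂ → ℝ)
    (hcont : ContinuousOn δ (ball (0:ℂ) 1 \ {0}))
    (hnonneg : ∀ z ∈ ball (0:ℂ) 1 \ {0}, 0 ≤ δ z)
    (hsub : SubhOn δ (ball (0:ℂ) 1 \ {0}))
    (hgrowth : ∀ ε > (0:ℝ), Filter.Tendsto (fun z : ℂ => δ z + ε * Real.log ‖z‖)
      (nhdsWithin 0 {z : ℂ | z ≠ 0}) Filter.atBot) :
    (∃ g : ℂ → ℝ, SubhOn g (ball (0:ℂ) 1) ∧ ∀ z ∈ ball (0:ℂ) 1 \ {0}, g z = δ z) ∧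
    ∀ z ∈ ball (0:ℂ) (1/2), z ≠ 0 → δ z ≤ sSup (δ '' sphere (0:ℂ) (1/2)) := by
  have hsub' : ∀ z : ℂ, ∀ ρ : ℝ, 0 < ρ → closedBall z ρ ⊆ ball (0:ℂ) 1 \ {0} →
      δ z ≤ Real.circleAverage δ z ρ := hsub.2
  have hmaj := majorant δ hcont hsub' hgrowth
  have hbd : ∀ R : ℝ, 0 < R → R < 1 → ∀ z ∈ closedBall (0:ℂ) R, z ≠ 0 →
      δ z ≤ sSup (δ '' sphere (0:ℂ) R) := by
    intro R hR hR1
    refine hmaj 0 R (closedBall_subset_ball hR1) (fun _ => sSup (δ '' sphere (0:ℂ) R))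
      (InnerProductSpace.harmonicOnNhd_const _) ?_
    intro z hz _
    have hss : sphere (0:ℂ) R ⊆ ball (0:ℂ) 1 \ {0} := by
      intro w hw
      refine ⟨(mem_sphere.1 hw).trans_lt hR1, fun h => ?_⟩
      rw [Set.mem_singleton_iff.1 h, mem_sphere, dist_self] at hw
      exact hR.ne hw
    exact le_csSup ((isCompact_sphere (0:ℂ) R).bddAbove_image (hcont.mono hss))
      (Set.mem_image_of_mem _ hz)
  refine ⟨?_, fun z hz hz0 => hbd (1/2) (by norm_num) (by norm_num) z
    (ball_subset_closedBall hz) hz0⟩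
  set l : Filter ℂ := nhdsWithin 0 {z : ℂ | z ≠ 0} with hl
  have hne : l.NeBot := by
    change (nhdsWithin (0:ℂ) {0}ᶜ).NeBot
    infer_instance
  have hnear : ∀ ρ > (0:ℝ), ∀ᶠ z in l, z ∈ ball (0:ℂ) ρ ∧ z ≠ 0 := by
    intro ρ hρ
    filter_upwards [self_mem_nhdsWithin, mem_nhdsWithin_of_mem_nhds (ball_mem_nhds (0:ℂ) hρ)]
      with z h1 h2 using ⟨h2, h1⟩
  have hup : Filter.IsBoundedUnder (· ≤ ·) l δ := by
    refine ⟨sSup (δ '' sphere (0:ℂ) (1/2)), ?_⟩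
    rw [Filter.eventually_map]
    filter_upwards [hnear (1/2) (by norm_num)] with z hz
    exact hbd (1/2) (by norm_num) (by norm_num) z (ball_subset_closedBall hz.1) hz.2
  have hlow : Filter.IsBoundedUnder (· ≥ ·) l δ := by
    refine ⟨0, ?_⟩
    rw [Filter.eventually_map]
    filter_upwards [hnear 1 one_pos] with z hz
    exact hnonneg z ⟨hz.1, hz.2⟩
  set g : ℂ → ℝ := Function.update δ 0 (Filter.limsup δ l) with hg
  have hg0 : g 0 = Filter.limsup δ l := Function.update_self _ _ _
  have hgz : ∀ z, z ≠ 0 → g z = δ z := fun z hz => Function.update_of_ne hz _ _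
  have hopen : IsOpen (ball (0:ℂ) 1 \ {(0:ℂ)}) := isOpen_ball.sdiff isClosed_singleton
  have hδat : ∀ z ∈ ball (0:ℂ) 1 \ {0}, ContinuousAt δ z := fun z hz =>
    hcont.continuousAt (hopen.mem_nhds hz)
  refine ⟨g, ⟨?_, ?_⟩, fun z hz => hgz z hz.2⟩
  · intro z hz
    by_cases hz0 : z = 0
    · subst hz0
      intro y hy
      rw [hg0] at hy
      apply Filter.Eventually.filter_mono nhdsWithin_le_nhds
      have h1 : ∀ᶠ w in l, δ w < y := Filter.eventually_lt_of_limsup_lt hy hup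
      rw [hl, eventually_nhdsWithin_iff] at h1
      filter_upwards [h1] with w hw
      by_cases hw0 : w = 0
      · rw [hw0, hg0]; exact hy
      · rw [hgz w hw0]; exact hw hw0
    · apply ContinuousWithinAt.upperSemicontinuousWithinAt
      apply ContinuousAt.continuousWithinAt
      refine (hδat z ⟨hz, hz0⟩).congr ?_
      filter_upwards [isOpen_ne.mem_nhds hz0] with w hw
      exact (hgz w hw).symm
  · intro c ρ hρ hD
    change g c ≤ Real.circleAverage g c ρ
    rcases lt_trichotomy ‖c‖ ρ with hc | hc | hc
    · -- the puncture is inside the disk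
      have h0b : (0:ℂ) ∈ ball c ρ := by simpa [dist_eq_norm] using hc
      have hs0 : ∀ z ∈ sphere c ρ, z ≠ 0 := by
        rintro z hz rfl
        exact (mem_ball.1 h0b).ne hz
      have hsc : ContinuousOn δ (sphere c ρ) := hcont.mono fun z hz =>
        ⟨hD (sphere_subset_closedBall hz), hs0 z hz⟩
      have eavg : Real.circleAverage g c ρ = Real.circleAverage δ c ρ :=
        Real.circleAverage_congr_sphere fun z hz =>
          hgz z (hs0 z (by rwa [abs_of_pos hρ] at hz))
      rw [eavg]
      apply le_of_forall_pos_le_add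
      intro η hη
      obtain ⟨h, hh, happ⟩ := approx_harm δ c ρ hρ hsc (η / 2) (by positivity)
      have hh2 : InnerProductSpace.HarmonicOnNhd (fun z => h z + η / 2) Set.univ :=
        hh.add (InnerProductSpace.harmonicOnNhd_const _)
      have hh2c : Continuous (fun z => h z + η / 2) := continuousOn_univ.1 hh2.continuousOn
      have hle := hmaj c ρ hD _ hh2 (fun z hz _ => by
        have := (abs_lt.1 (happ z hz)).2
        linarith)
      have hgle : g c ≤ h c + η / 2 := by
        by_cases hc0 : c = 0
        · rw [hc0] at h0b hle ⊢
          rw [hg0]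
          have ht : Filter.Tendsto (fun z => h z + η / 2) l (nhds (h 0 + η / 2)) :=
            hh2c.continuousAt.mono_left nhdsWithin_le_nhds
          rw [← ht.limsup_eq]
          apply Filter.limsup_le_limsup _ hlow.isCoboundedUnder_le ht.isBoundedUnder_le
          filter_upwards [hnear ρ hρ] with z hz
          exact hle z (ball_subset_closedBall hz.1) hz.2
        · rw [hgz c hc0]
          exact hle c (mem_closedBall_self hρ.le) hc0
      have hmean : Real.circleAverage (fun z => h z + η / 2) c ρ = h c + η / 2 :=
        (hh2.mono (Set.subset_univ _)).circleAverage_eq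
      have hδi : CircleIntegrable δ c ρ := hsc.circleIntegrable hρ.le
      have hmono : Real.circleAverage (fun z => h z + η / 2) c ρ
          ≤ Real.circleAverage (fun z => δ z + η) c ρ := by
        apply Real.circleAverage_mono hh2c.continuousOn.circleIntegrable'
        · exact (hsc.add continuousOn_const).circleIntegrable hρ.le
        · intro z hz
          rw [abs_of_pos hρ] at hz
          have := (abs_lt.1 (happ z hz)).1
          linarith
      rw [Real.circleAverage_fun_add hδi (circleIntegrable_const η c ρ),
        Real.circleAverage_const, hmean] at hmono
      linarith
    · -- the puncture is on the boundary circle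
      have hc0 : c ≠ 0 := by
        intro h
        rw [h, norm_zero] at hc
        exact hρ.ne hc
      rw [hgz c hc0]
      -- a bound for `δ` on the disk
      obtain ⟨R, hR1, hR0, hRD⟩ : ∃ R : ℝ, R < 1 ∧ 0 < R ∧ closedBall c ρ ⊆ closedBall 0 R := by
        obtain ⟨w, hw, hmax⟩ := (isCompact_closedBall c ρ).exists_isMaxOn
          ⟨c, mem_closedBall_self hρ.le⟩ continuous_norm.continuousOn
        refine ⟨‖w‖, mem_ball_zero_iff.1 (hD hw), ?_, fun z hz => ?_⟩
        · exact (norm_pos_iff.2 hc0).trans_le (hmax (mem_closedBall_self hρ.le))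
        · exact mem_closedBall_zero_iff.2 (hmax hz)
      set M := sSup (δ '' sphere (0:ℂ) R)
      have hev : ∀ᶠ r in nhdsWithin ρ (Set.Iio ρ), 0 < r ∧ r < ρ := by
        filter_upwards [self_mem_nhdsWithin,
          mem_nhdsWithin_of_mem_nhds (lt_mem_nhds hρ)] with r h1 h2 using ⟨h2, h1⟩
      have hball : ∀ r, 0 < r ∧ r < ρ → closedBall c r ⊆ ball (0:ℂ) 1 \ {0} := by
        intro r hr z hz
        refine ⟨hD (closedBall_subset_closedBall hr.2.le hz), ?_⟩
        rintro rfl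
        rw [mem_closedBall, dist_eq_norm, zero_sub, norm_neg, hc] at hz
        exact absurd hz (not_le.2 hr.2)
      have hmem : ∀ r, 0 < r ∧ r < ρ → ∀ θ, circleMap c r θ ∈ closedBall c r :=
        fun r hr θ => sphere_subset_closedBall (circleMap_mem_sphere c hr.1.le θ)
      have hae : ∀ᵐ θ : ℝ, circleMap c ρ θ ≠ 0 := by
        have := ((Set.countable_singleton (0:ℂ)).preimage_circleMap c hρ.ne').measure_zero volume
        exact measure_eq_zero_iff_ae_notMem.1 this
      have hlim : Filter.Tendsto (fun r => ∫ θ in (0:ℝ)..(2 * Real.pi), δ (circleMap c r θ))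
          (nhdsWithin ρ (Set.Iio ρ))
          (nhds (∫ θ in (0:ℝ)..(2 * Real.pi), g (circleMap c ρ θ))) := by
        apply intervalIntegral.tendsto_integral_filter_of_dominated_convergence (fun _ => M)
        · filter_upwards [hev] with r hr
          exact (hcont.comp_continuous (continuous_circleMap c r)
            fun θ => hball r hr (hmem r hr θ)).aestronglyMeasurable
        · filter_upwards [hev] with r hr
          refine Filter.Eventually.of_forall fun θ _ => ?_
          have hb := hball r hr (hmem r hr θ)
          rw [Real.norm_eq_abs, abs_of_nonneg (hnonneg _ hb)]
          exact hbd R hR0 hR1 _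
            (hRD (closedBall_subset_closedBall hr.2.le (hmem r hr θ))) hb.2
        · exact intervalIntegrable_const
        · filter_upwards [hae] with θ hθ _
          rw [hgz _ hθ]
          have hca := hδat (circleMap c ρ θ)
            ⟨hD (sphere_subset_closedBall (circleMap_mem_sphere c hρ.le θ)), hθ⟩
          have hcr : Filter.Tendsto (fun r : ℝ => circleMap c r θ) (nhdsWithin ρ (Set.Iio ρ))
              (nhds (circleMap c ρ θ)) := by
            apply Filter.Tendsto.mono_left _ nhdsWithin_le_nhds
            apply Continuous.tendsto (f := fun r : ℝ => circleMap c r θ)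
            unfold circleMap
            fun_prop
          exact hca.tendsto.comp hcr
      have hlim2 := hlim.const_mul (2 * Real.pi)⁻¹
      refine ge_of_tendsto hlim2 ?_
      filter_upwards [hev] with r hr
      exact hsub' c r hr.1 (hball r hr)
    · -- the puncture is outside the closed disk
      have hn : ∀ z ∈ closedBall c ρ, z ≠ 0 := by
        rintro z hz rfl
        rw [mem_closedBall, dist_eq_norm, zero_sub, norm_neg] at hz
        linarith
      have eavg : Real.circleAverage g c ρ = Real.circleAverage δ c ρ :=
        Real.circleAverage_congr_sphere fun z hz =>
          hgz z (hn z (sphere_subset_closedBall (by rwa [abs_of_pos hρ] at hz)))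
      rw [eavg, hgz c (hn c (mem_closedBall_self hρ.le))]
      exact hsub' c ρ hρ fun z hz => ⟨hD hz, hn z hz⟩
end
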